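/- arXiv:1612.03351 — 4 statements merged into one kernel-verified Lean document; each statement's English description precedes it below -/
import Mathlib

section
/- For all real numbers α, β with α ≠ 0 and every real y > 0, the integral ∫_{-∞}^{∞} β e^{ν} exp(−πy(α² e^{−2ν} + β² e^{2ν})) dν converges and equals (1/(2√y))·sgn(β)·exp(−2πy|αβ|), where sgn(0) = 0. -/
open Complex MeasureTheory
open scoped Classical

noncomputable section

/-- `e(a) = exp(2πia)`. -/
def e (a : ℂ) : ℂ := Complex.exp (2 * (Real.pi : ℂ) * Complex.I * a)

/-- The Fourier transform `F(g)(x) = ∫ g(w) e(wx) dw`. -/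
def fourierT (g : ℝ → ℂ) (x : ℝ) : ℂ := ∫ w : ℝ, g w * e ((w * x : ℝ))

/-- The operator `E_σ(f)(x) = e(x²σ/2) ∫_0^x e(-w²σ/2) f(w) dw`. -/
def Eop (σ : ℂ) (f : ℝ → ℂ) (x : ℝ) : ℂ :=
  e ((x : ℂ)^2 * σ / 2) * ∫ w in (0:ℝ)..x, e (-(w : ℂ)^2 * σ / 2) * f w

/-- `ω_τ(x) = e(-x²τ/2) ∑_{m ∈ ℤ+1/2, m ≥ |x|} e(m²τ/2 + m/2)`. -/
def omega (τ : ℂ) (x : ℝ) : ℂ :=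
  e (-(x : ℂ)^2 * τ / 2) *
    ∑' m : ℤ, if |x| ≤ (m : ℝ) + 1/2 then
      e (((m : ℂ) + 1/2)^2 / 2 * τ + ((m : ℂ) + 1/2) / 2) else 0

/-- `η³(τ) = -i ∑_{m ∈ ℤ+1/2} m e(m²τ/2 + m/2)`. -/
def eta3 (τ : ℂ) : ℂ :=
  -Complex.I * ∑' m : ℤ, ((m : ℂ) + 1/2) * e (((m : ℂ) + 1/2)^2 / 2 * τ + ((m : ℂ) + 1/2) / 2)

/-- The complementary error function. -/
def erfc (x : ℝ) : ℝ := (2 / Real.sqrt Real.pi) * ∫ t in Set.Ioi x, Real.exp (-t^2)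

/-- `g⁺_τ`. -/
def gplus (τ : ℂ) (x : ℝ) : ℂ :=
  e (-(x : ℂ)^2 * τ / 2) * ((Real.sign x : ℂ) / (Complex.I * eta3 τ)) *
    ∑' m : ℤ, if |x| < (m : ℝ) + 1/2 then
      (((m : ℝ) + 1/2 - |x| : ℝ) : ℂ) * e (((m : ℂ) + 1/2)^2 / 2 * τ + ((m : ℂ) + 1/2) / 2)
    else 0

/-- `g*_τ`. -/
def gstar (τ : ℂ) (x : ℝ) : ℂ :=
  e (-(x : ℂ)^2 * τ / 2) * ((Real.sign x : ℂ) / 2) *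
    (erfc (Real.sqrt (2 * Real.pi * τ.im) * |x|) : ℂ)

/-- `g_τ = g⁺_τ - g*_τ`. -/
def gfun (τ : ℂ) (x : ℝ) : ℂ := gplus τ x - gstar τ x

/-- The operator `ξ_k f = 2i v^k conj(∂f/∂τ̄)`, with `∂/∂τ̄ = (1/2)(∂/∂u + i ∂/∂v)`. -/
def xi (k : ℝ) (f : ℂ → ℂ) (τ : ℂ) : ℂ :=
  2 * Complex.I * ((τ.im ^ k : ℝ) : ℂ) *
    (starRingEnd ℂ) ((1/2 : ℂ) * (fderiv ℝ f τ 1 + Complex.I * fderiv ℝ f τ Complex.I))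

/-- Sum of divisors function `σ₁`. -/
def sigma1 (n : ℕ) : ℕ := ∑ d ∈ Nat.divisors n, d

/-- The weight 2 Eisenstein series `E₂`. -/
def E2 (τ : ℂ) : ℂ := 1 - 24 * ∑' n : ℕ, (sigma1 (n+1) : ℂ) * e ((n + 1 : ℂ) * τ)

/-- `ϑ̃_{N,h}`. -/
def tvtheta (N : ℕ) (h : ℝ) (τ : ℂ) : ℂ :=
  (if ∃ m : ℤ, h = (m : ℝ) + 1/2 then
      e ((h : ℂ) / 2) * E2 τ / (12 * (N : ℂ) * Complex.I * eta3 τ) else 0)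
  + ∑' n : ℤ, gfun τ ((N : ℝ) * n + h)

/-- The Schwartz function `φ_τ(x,y) = √(2v)·x·e(x²τ/2 - y²τ̄/2)`. -/
def Phi (τ : ℂ) (x y : ℝ) : ℂ :=
  (Real.sqrt (2 * τ.im) : ℂ) * (x : ℂ) *
    e ((x : ℂ)^2 * τ / 2 - (y : ℂ)^2 * (starRingEnd ℂ) τ / 2)

/-- The signature (1,1) bilinear form `B((a₁,a₂),(b₁,b₂)) = a₁b₂ + a₂b₁`. -/
def Bform (a b : ℝ × ℝ) : ℝ := a.1 * b.2 + a.2 * b.1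

/-- `Z⁺_t = (t/√2, t⁻¹/√2)`. -/
def Zp (t : ℝ) : ℝ × ℝ := (t / Real.sqrt 2, t⁻¹ / Real.sqrt 2)

/-- `Z⁻_t = (t/√2, -t⁻¹/√2)`. -/
def Zm (t : ℝ) : ℝ × ℝ := (t / Real.sqrt 2, -t⁻¹ / Real.sqrt 2)

end

/-!
Write the exponent as `-(a * exp (-2ν) + b * exp (2ν))` with `a, b > 0`. A translation of `ν`
balances the two terms, giving `-2 * c * cosh (2ν) = -2 * c - 4 * c * sinh ν ^ 2` with
`c = √(a * b)`. Since `exp = cosh + sinh` and the `sinh` part is odd, only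
`∫ cosh ν * exp (-4 * c * sinh ν ^ 2)` survives, and `u = sinh ν` turns it into a Gaussian integral.
-/

section OddFunctions

variable {G E : Type*} [MeasurableSpace G] [AddGroup G] [MeasurableNeg G]
  [NormedAddCommGroup E] [NormedSpace ℝ E]

theorem integral_eq_zero_of_odd {μ : Measure G} [μ.IsNegInvariant] {f : G → E}
    (hf : Function.Odd f) : ∫ x, f x ∂μ = 0 := by
  have : IsAddTorsionFree E := .of_isTorsionFree ℝ E
  have h_eq_neg : ∫ x, f x ∂μ = -∫ x, f x ∂μ := calc
    ∫ x, f x ∂μ = ∫ x, f (-x) ∂μ := (integral_neg_eq_self f μ).symm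
    _ = -∫ x, f x ∂μ := by simp only [hf.eq, integral_neg]
  exact self_eq_neg.mp h_eq_neg

end OddFunctions

section SinhSubstitution

variable {E : Type*} [NormedAddCommGroup E] [NormedSpace ℝ E] {f : ℝ → E}

theorem integrable_cosh_smul_comp_sinh_iff :
    Integrable (fun x ↦ Real.cosh x • f (Real.sinh x)) ↔ Integrable f := by
  have h := integrableOn_image_iff_integrableOn_deriv_smul_of_monotoneOn MeasurableSet.univ
    (fun x _ ↦ (Real.hasDerivAt_sinh x).hasDerivWithinAt)
    (Real.sinh_strictMono.monotone.monotoneOn Set.univ) f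
  rw [Set.image_univ, Real.sinh_surjective.range_eq, integrableOn_univ, integrableOn_univ] at h
  exact h.symm

theorem integral_cosh_smul_comp_sinh (f : ℝ → E) :
    ∫ x, Real.cosh x • f (Real.sinh x) = ∫ u, f u := by
  have h := integral_image_eq_integral_deriv_smul_of_monotoneOn MeasurableSet.univ
    (fun x _ ↦ (Real.hasDerivAt_sinh x).hasDerivWithinAt)
    (Real.sinh_strictMono.monotone.monotoneOn Set.univ) f
  rw [Set.image_univ, Real.sinh_surjective.range_eq, setIntegral_univ, setIntegral_univ] at h
  exact h.symm

theorem integrable_sinh_smul_comp_sinh (hf : Integrable f) :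
    Integrable (fun x ↦ Real.sinh x • f (Real.sinh x)) := by
  have h_tanh_meas : AEStronglyMeasurable Real.tanh := by
    simp only [funext Real.tanh_eq_sinh_div_cosh]
    exact (Real.measurable_sinh.div Real.measurable_cosh).aestronglyMeasurable
  have h_tanh_le : ∀ x, ‖Real.tanh x‖ ≤ 1 := fun x ↦
    abs_le.mpr ⟨(Real.neg_one_lt_tanh x).le, (Real.tanh_lt_one x).le⟩
  have h_tanh_mul_cosh : ∀ x, Real.tanh x * Real.cosh x = Real.sinh x := fun x ↦ by
    rw [Real.tanh_eq_sinh_div_cosh, div_mul_cancel₀ _ (Real.cosh_pos x).ne']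
  refine ((integrable_cosh_smul_comp_sinh_iff.mpr hf).bdd_smul 1 h_tanh_meas
    (.of_forall h_tanh_le)).congr (.of_forall fun x ↦ ?_)
  simp only [Pi.smul_apply', smul_smul, h_tanh_mul_cosh]

theorem integrable_exp_smul_comp_sinh (hf : Integrable f) :
    Integrable (fun x ↦ Real.exp x • f (Real.sinh x)) := by
  simpa only [← Real.cosh_add_sinh, add_smul] using
    (integrable_cosh_smul_comp_sinh_iff.mpr hf).fun_add (integrable_sinh_smul_comp_sinh hf)

theorem integral_exp_smul_comp_sinh_of_even (hf : Integrable f) (hf_even : Function.Even f) :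
    ∫ x, Real.exp x • f (Real.sinh x) = ∫ u, f u := by
  have h_odd : Function.Odd (fun x ↦ Real.sinh x • f (Real.sinh x)) := fun x ↦ by
    simp only [Real.sinh_neg, hf_even.eq, neg_smul]
  simp only [← Real.cosh_add_sinh, add_smul]
  rw [integral_add (integrable_cosh_smul_comp_sinh_iff.mpr hf) (integrable_sinh_smul_comp_sinh hf),
    integral_cosh_smul_comp_sinh, integral_eq_zero_of_odd h_odd, add_zero]

end SinhSubstitution

section ExpMulExpNeg

theorem exp_mul_exp_neg_mul_exp_add_exp (c x : ℝ) :
    Real.exp x * Real.exp (-(c * (Real.exp (-2 * x) + Real.exp (2 * x)))) =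
      Real.exp (-(2 * c)) * (Real.exp x * Real.exp (-(4 * c) * Real.sinh x ^ 2)) := by
  have h_sinh_sq : Real.exp (-2 * x) + Real.exp (2 * x) = 2 + 4 * Real.sinh x ^ 2 := calc
    Real.exp (-2 * x) + Real.exp (2 * x) = 2 * Real.cosh (2 * x) := by
      rw [Real.cosh_eq, neg_mul]
      ring
    _ = 2 + 4 * Real.sinh x ^ 2 := by
      rw [Real.cosh_two_mul, Real.cosh_sq]
      ring
  rw [h_sinh_sq, mul_left_comm, ← Real.exp_add (-(2 * c))]
  congr 2
  ring

theorem integrable_exp_mul_exp_neg_mul_exp_add_exp {c : ℝ} (hc : 0 < c) :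
    Integrable fun x ↦
      Real.exp x * Real.exp (-(c * (Real.exp (-2 * x) + Real.exp (2 * x)))) := by
  simp only [exp_mul_exp_neg_mul_exp_add_exp]
  exact (integrable_exp_smul_comp_sinh (integrable_exp_neg_mul_sq (by positivity))).const_mul _

theorem integral_exp_mul_exp_neg_mul_exp_add_exp {c : ℝ} (hc : 0 < c) :
    ∫ x, Real.exp x * Real.exp (-(c * (Real.exp (-2 * x) + Real.exp (2 * x)))) =
      √(Real.pi / c) / 2 * Real.exp (-(2 * c)) := by
  have h_even : Function.Even fun u : ℝ ↦ Real.exp (-(4 * c) * u ^ 2) := fun u ↦ by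
    simp only [neg_sq]
  have h_gaussian : ∫ x, Real.exp x * Real.exp (-(4 * c) * Real.sinh x ^ 2) =
      √(Real.pi / (4 * c)) :=
    (integral_exp_smul_comp_sinh_of_even (integrable_exp_neg_mul_sq (by positivity)) h_even).trans
      (integral_gaussian _)
  have h_sqrt : √(Real.pi / (4 * c)) = √(Real.pi / c) / 2 := by
    rw [mul_comm, ← div_div, Real.sqrt_div' _ zero_le_four,
      show (4 : ℝ) = 2 ^ 2 by norm_num, Real.sqrt_sq zero_le_two]
  simp only [exp_mul_exp_neg_mul_exp_add_exp]
  rw [integral_const_mul, h_gaussian, h_sqrt, mul_comm]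

theorem exists_eq_mul_exp_and_eq_mul_exp_neg {a b : ℝ} (ha : 0 < a) (hb : 0 < b) :
    ∃ c t : ℝ, 0 < c ∧ a = c * Real.exp t ∧ b = c * Real.exp (-t) := by
  have h_exp : Real.exp (Real.log (√a / √b)) = √a / √b := Real.exp_log (by positivity)
  refine ⟨√a * √b, Real.log (√a / √b), by positivity, ?_, ?_⟩
  · rw [h_exp]
    field_simp
    exact (Real.sq_sqrt ha.le).symm
  · rw [Real.exp_neg, h_exp]
    field_simp
    exact (Real.sq_sqrt hb.le).symm

theorem exp_mul_exp_neg_add_eq_comp_sub (c t x : ℝ) :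
    Real.exp x * Real.exp (-(c * Real.exp t * Real.exp (-2 * x) +
        c * Real.exp (-t) * Real.exp (2 * x))) =
      Real.exp (t / 2) * (Real.exp (x - t / 2) *
        Real.exp (-(c * (Real.exp (-2 * (x - t / 2)) + Real.exp (2 * (x - t / 2)))))) := by
  have h_left : Real.exp (-2 * (x - t / 2)) = Real.exp t * Real.exp (-2 * x) := by
    rw [← Real.exp_add]
    ring_nf
  have h_right : Real.exp (2 * (x - t / 2)) = Real.exp (-t) * Real.exp (2 * x) := by
    rw [← Real.exp_add]
    ring_nf
  rw [h_left, h_right, ← mul_assoc (Real.exp (t / 2)), ← Real.exp_add (t / 2), add_sub_cancel,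
    mul_add, ← mul_assoc c, ← mul_assoc c]

variable {a b : ℝ}

theorem integrable_exp_mul_exp_neg_add (ha : 0 < a) (hb : 0 < b) :
    Integrable fun x ↦
      Real.exp x * Real.exp (-(a * Real.exp (-2 * x) + b * Real.exp (2 * x))) := by
  obtain ⟨c, t, hc, rfl, rfl⟩ := exists_eq_mul_exp_and_eq_mul_exp_neg ha hb
  simp only [exp_mul_exp_neg_add_eq_comp_sub]
  exact ((integrable_exp_mul_exp_neg_mul_exp_add_exp hc).comp_sub_right (t / 2)).const_mul _

theorem integral_exp_mul_exp_neg_add (ha : 0 < a) (hb : 0 < b) :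
    ∫ x, Real.exp x * Real.exp (-(a * Real.exp (-2 * x) + b * Real.exp (2 * x))) =
      √(Real.pi / b) / 2 * Real.exp (-(2 * √(a * b))) := by
  obtain ⟨c, t, hc, rfl, rfl⟩ := exists_eq_mul_exp_and_eq_mul_exp_neg ha hb
  have h_prod : √(c * Real.exp t * (c * Real.exp (-t))) = c := by
    rw [mul_mul_mul_comm, ← Real.exp_add, add_neg_cancel, Real.exp_zero, mul_one,
      Real.sqrt_mul_self hc.le]
  have h_quot : √(Real.pi / (c * Real.exp (-t))) = Real.exp (t / 2) * √(Real.pi / c) := by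
    rw [Real.exp_neg, ← div_div, div_inv_eq_mul, mul_comm, Real.sqrt_mul (Real.exp_pos t).le,
      Real.exp_half]
  simp only [exp_mul_exp_neg_add_eq_comp_sub]
  rw [integral_const_mul, integral_sub_right_eq_self (fun x ↦
      Real.exp x * Real.exp (-(c * (Real.exp (-2 * x) + Real.exp (2 * x))))) (t / 2),
    integral_exp_mul_exp_neg_mul_exp_add_exp hc, h_prod, h_quot]
  ring

end ExpMulExpNeg

theorem real_sign_eq_div_abs (x : ℝ) : Real.sign x = x / |x| := by
  rcases lt_trichotomy x 0 with hx | rfl | hx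
  · rw [Real.sign_of_neg hx, abs_of_neg hx, div_neg, div_self hx.ne]
  · rw [Real.sign_zero, zero_div]
  · rw [Real.sign_of_pos hx, abs_of_pos hx, div_self hx.ne']

/-- Hecke's unfolding integral identity. -/
theorem integral_identity (α β y : ℝ) (hα : α ≠ 0) (hy : 0 < y) :
    MeasureTheory.Integrable (fun ν : ℝ =>
      β * Real.exp ν *
        Real.exp (-(Real.pi * y * (α^2 * Real.exp (-2*ν) + β^2 * Real.exp (2*ν))))) ∧
    (∫ ν : ℝ, β * Real.exp ν *
        Real.exp (-(Real.pi * y * (α^2 * Real.exp (-2*ν) + β^2 * Real.exp (2*ν))))) =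
      (1 / (2 * Real.sqrt y)) * Real.sign β * Real.exp (-(2 * Real.pi * y * |α * β|)) := by
  rcases eq_or_ne β 0 with rfl | hβ
  · simp
  have ha : 0 < Real.pi * y * α ^ 2 := by positivity
  have hb : 0 < Real.pi * y * β ^ 2 := by positivity
  have h_prod : √(Real.pi * y * α ^ 2 * (Real.pi * y * β ^ 2)) = Real.pi * y * |α * β| := by
    rw [mul_mul_mul_comm, ← mul_pow, ← sq, Real.sqrt_mul (by positivity),
      Real.sqrt_sq (by positivity), Real.sqrt_sq_eq_abs]
  have h_quot : √(Real.pi / (Real.pi * y * β ^ 2)) = 1 / (√y * |β|) := by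
    rw [mul_assoc, div_mul_cancel_left₀ Real.pi_ne_zero, Real.sqrt_inv, Real.sqrt_mul hy.le,
      Real.sqrt_sq_eq_abs, one_div]
  simp only [mul_add, ← mul_assoc (Real.pi * y), mul_assoc β]
  refine ⟨(integrable_exp_mul_exp_neg_add ha hb).const_mul β, ?_⟩
  rw [integral_const_mul, integral_exp_mul_exp_neg_add ha hb, h_prod, h_quot,
    real_sign_eq_div_abs]
  ring_nf
end

section
/- For every τ in the complex upper half plane H and all real x, y, one has φ_{−1/τ}(x, y) = −τ · ∫_{-∞}^{∞} ∫_{-∞}^{∞} φ_τ(w, r) e(xw − yr) dw dr, where φ_τ(x,y) := √(2 Im τ) · x · e(x²τ/2 − y² conj(τ)/2). -/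
open Complex MeasureTheory
open scoped Classical

/-!
The two variables of `Phi τ` separate: it is `√(2 Im τ)` times `w e(w²τ/2)` in the first variable
times `e(-r² τ̄/2)` in the second, and `-τ̄` again lies in the upper half plane. The Fourier
transform of `e(w²σ/2)` at `x` is `(i/σ)^(1/2) e(-x²/(2σ))`, and an additional factor `w` multiplies
it by `-x/σ`, because the total derivative `d/dw e(w²σ/2 + wx) = 2πi (σw + x) e(w²σ/2 + wx)`
integrates to zero. The square roots `(i/τ)^(1/2)` and `(-i/τ̄)^(1/2)` are conjugate, so their
product `1/|τ|` turns `√(2 Im τ)` into `√(2 Im (-1/τ))`.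
-/

section GaussianMoment

theorem integrable_pow_mul_cexp_quadratic {b : ℂ} (hb : b.re < 0) (c d : ℂ) (n : ℕ) :
    Integrable fun w : ℝ ↦ (w : ℂ) ^ n * cexp (b * w ^ 2 + c * w + d) := by
  have pow_le (w : ℝ) : |w| ^ n ≤ n.factorial * (Real.exp w + Real.exp (-w)) := by
    rw [← div_le_iff₀' (by positivity)]
    exact (Real.pow_div_factorial_le_exp _ (abs_nonneg w) n).trans (Real.exp_abs_le w)
  have norm_shift (s w : ℝ) : ‖cexp (b * w ^ 2 + (c + s) * w + d)‖ =
      Real.exp (s * w) * ‖cexp (b * w ^ 2 + c * w + d)‖ := by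
    rw [← Complex.norm_exp_ofReal, ← norm_mul, ← Complex.exp_add]
    congr 2
    push_cast
    ring
  have integrable_shift (s : ℝ) := (integrable_cexp_quadratic' hb (c + s) d).norm
  refine (((integrable_shift 1).add (integrable_shift (-1))).const_mul (n.factorial : ℝ)).mono'
    (by fun_prop) (.of_forall fun w ↦ ?_)
  rw [Pi.add_apply, norm_shift, norm_shift, ← add_mul, ← mul_assoc, one_mul, neg_one_mul, norm_mul,
    norm_pow, norm_real, Real.norm_eq_abs]
  gcongr
  exact pow_le w

theorem integral_mul_cexp_quadratic {b : ℂ} (hb : b.re < 0) (c d : ℂ) :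
    ∫ w : ℝ, (w : ℂ) * cexp (b * w ^ 2 + c * w + d) =
      -(c / (2 * b)) * ∫ w : ℝ, cexp (b * w ^ 2 + c * w + d) := by
  have hb₀ : b ≠ 0 := by rintro rfl; simp at hb
  set f : ℝ → ℂ := fun w ↦ cexp (b * w ^ 2 + c * w + d)
  have integrable_f : Integrable f := integrable_cexp_quadratic' hb c d
  have integrable_mul_f : Integrable fun w : ℝ ↦ (w : ℂ) * f w := by
    simpa using integrable_pow_mul_cexp_quadratic hb c d 1
  have hasDerivAt_f (w : ℝ) : HasDerivAt f (2 * b * (w * f w) + c * f w) w := by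
    have := ((((hasDerivAt_id (w : ℂ)).pow 2).const_mul b).add
      ((hasDerivAt_id (w : ℂ)).const_mul c)).add_const d
    convert! this.cexp.comp_ofReal using 1
    simp [f]
    ring
  have total_derivative : 2 * b * (∫ w : ℝ, (w : ℂ) * f w) + c * ∫ w, f w = 0 := by
    rw [← integral_const_mul, ← integral_const_mul,
      ← integral_add (integrable_mul_f.const_mul _) (integrable_f.const_mul _)]
    exact integral_eq_zero_of_hasDerivAt_of_integrable hasDerivAt_f
      ((integrable_mul_f.const_mul _).add (integrable_f.const_mul _)) integrable_f
  refine mul_left_cancel₀ (mul_ne_zero two_ne_zero hb₀) ?_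
  rw [eq_neg_of_add_eq_zero_left total_derivative, neg_mul, mul_neg, ← mul_assoc,
    mul_div_cancel₀ c (mul_ne_zero two_ne_zero hb₀)]

end GaussianMoment

section FourierTransform

theorem e_add (a b : ℂ) : e (a + b) = e a * e b := by
  rw [e, e, e, ← Complex.exp_add, mul_add]

theorem integral_integral_mul_mul_e (f g : ℝ → ℂ) (x y : ℝ) :
    ∫ w : ℝ, ∫ r : ℝ, f w * g r * e ((x * w - y * r : ℝ)) = fourierT f x * fourierT g (-y) := by
  have split_e (w r : ℝ) : f w * g r * e ((x * w - y * r : ℝ)) =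
      f w * e ((w * x : ℝ)) * (g r * e ((r * -y : ℝ))) := by
    rw [show ((x * w - y * r : ℝ) : ℂ) = (w * x : ℝ) + (r * -y : ℝ) by push_cast; ring, e_add]
    ring
  simp only [split_e, integral_const_mul, integral_mul_const, fourierT]

theorem fourierT_const_mul (a : ℂ) (f : ℝ → ℂ) (x : ℝ) :
    fourierT (fun w ↦ a * f w) x = a * fourierT f x := by
  simp only [fourierT, mul_assoc, integral_const_mul]

/-- The Gaussian `w ↦ e(w²σ/2)` with parameter `σ`, normalised as in `Phi`. It is a Schwartz
function exactly when `σ` lies in the upper half plane. -/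
noncomputable def gaussian (σ : ℂ) (w : ℝ) : ℂ := e ((w : ℂ) ^ 2 * σ / 2)

theorem gaussian_neg (σ : ℂ) (w : ℝ) : gaussian σ (-w) = gaussian σ w := by
  simp [gaussian]

theorem gaussian_mul_e (σ : ℂ) (w x : ℝ) : gaussian σ w * e ((w * x : ℝ)) =
    cexp (Real.pi * I * σ * w ^ 2 + 2 * Real.pi * I * x * w + 0) := by
  rw [gaussian, ← e_add, e]
  congr 1
  push_cast
  ring

theorem re_pi_mul_I_mul_neg_of_im_pos {σ : ℂ} (hσ : 0 < σ.im) : (Real.pi * I * σ).re < 0 := by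
  simpa using mul_pos Real.pi_pos hσ

theorem fourierT_gaussian {σ : ℂ} (hσ : 0 < σ.im) (x : ℝ) :
    fourierT (gaussian σ) x = (I / σ) ^ (1 / 2 : ℂ) * gaussian (-1 / σ) x := by
  have hσ₀ : σ ≠ 0 := by rintro rfl; simp at hσ
  simp only [fourierT, gaussian_mul_e]
  rw [integral_cexp_quadratic (re_pi_mul_I_mul_neg_of_im_pos hσ), gaussian, e]
  congr 2
  · field_simp
    simp
  · field_simp
    simp
    ring

theorem fourierT_mul_gaussian {σ : ℂ} (hσ : 0 < σ.im) (x : ℝ) :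
    fourierT (fun w ↦ w * gaussian σ w) x = -(x / σ) * fourierT (gaussian σ) x := by
  have linear_coeff : 2 * Real.pi * I * x / (2 * (Real.pi * I * σ)) = x / σ := by
    field_simp
  simp only [fourierT, mul_assoc _ (gaussian σ _), gaussian_mul_e]
  rw [integral_mul_cexp_quadratic (re_pi_mul_I_mul_neg_of_im_pos hσ), linear_coeff]

end FourierTransform

section Phi

open scoped ComplexConjugate

theorem Phi_eq_mul_gaussian (τ : ℂ) (x y : ℝ) :
    Phi τ x y = Real.sqrt (2 * τ.im) * (x * gaussian τ x) * gaussian (-conj τ) y := by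
  rw [Phi, show (x : ℂ) ^ 2 * τ / 2 - (y : ℂ) ^ 2 * conj τ / 2 =
    (x : ℂ) ^ 2 * τ / 2 + (y : ℂ) ^ 2 * -conj τ / 2 by ring, e_add]
  simp only [gaussian, mul_assoc]

theorem cpow_mul_conj_cpow {z : ℂ} (hz : z.arg ≠ Real.pi) (s : ℝ) :
    z ^ (s : ℂ) * conj z ^ (s : ℂ) = (‖z‖ ^ (2 * s) : ℝ) := by
  rw [conj_cpow _ _ hz, conj_ofReal, mul_conj', norm_cpow_real, mul_comm 2 s,
    Real.rpow_mul (norm_nonneg z), Real.rpow_two, ofReal_pow]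

theorem cpow_half_I_div_mul_conj {τ : ℂ} (hτ : 0 < τ.im) :
    (I / τ) ^ (1 / 2 : ℂ) * (I / -conj τ) ^ (1 / 2 : ℂ) = (‖τ‖ : ℂ)⁻¹ := by
  have hτ₀ : τ ≠ 0 := by rintro rfl; simp at hτ
  have re_pos : 0 < (I / τ).re := by
    simpa [div_re] using div_pos hτ (normSq_pos.mpr hτ₀)
  have arg_ne : (I / τ).arg ≠ Real.pi := fun h ↦ (arg_eq_pi_iff.mp h).1.not_gt re_pos
  rw [show I / -conj τ = conj (I / τ) by simp [div_neg, neg_div]]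
  simpa using cpow_mul_conj_cpow arg_ne (1 / 2)

theorem sqrt_two_mul_im_neg_one_div (τ : ℂ) :
    Real.sqrt (2 * (-1 / τ).im) = Real.sqrt (2 * τ.im) / ‖τ‖ := by
  rw [neg_div, one_div, neg_im, inv_im, neg_div, neg_neg, ← mul_div_assoc,
    Real.sqrt_div' _ (normSq_nonneg τ), normSq_eq_norm_sq, Real.sqrt_sq (norm_nonneg τ)]

end Phi

/-- transformation of `φ_τ` under the signature (1,1) Fourier transform. -/
theorem phi_fourier_transform (τ : ℂ) (hτ : 0 < τ.im) (x y : ℝ) :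
    Phi (-1/τ) x y = -τ * ∫ w : ℝ, ∫ r : ℝ, Phi τ w r * e ((x*w - y*r : ℝ)) := by
  have hτ₀ : τ ≠ 0 := by rintro rfl; simp at hτ
  have im_neg_conj_pos : 0 < (-(starRingEnd ℂ) τ).im := by simpa using hτ
  have neg_conj_inversion : -(starRingEnd ℂ) (-1 / τ) = -1 / -(starRingEnd ℂ) τ := by
    simp [div_neg, neg_div]
  simp only [Phi_eq_mul_gaussian τ]
  rw [integral_integral_mul_mul_e, fourierT_const_mul, fourierT_mul_gaussian hτ,
    fourierT_gaussian hτ, fourierT_gaussian im_neg_conj_pos, gaussian_neg, Phi_eq_mul_gaussian,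
    neg_conj_inversion, sqrt_two_mul_im_neg_one_div]
  push_cast
  rw [div_eq_mul_inv, ← cpow_half_I_div_mul_conj hτ]
  field_simp
end

section
/- Let X = (x₁, x₂) ∈ ℝ², t > 0 and τ = u + iv ∈ H. Set Z⁺_t := (t/√2, t^{-1}/√2), Z⁻_t := (t/√2, −t^{-1}/√2), and B((a₁,a₂),(b₁,b₂)) := a₁b₂ + a₂b₁. Then 2 ξ₁[τ ↦ φ_τ(B(X, Z⁺_t), B(X, Z⁻_t))] = t · (∂/∂t)[φ_τ(B(X, Z⁻_t), B(X, Z⁺_t))], where φ_τ(x,y) := √(2v) · x · e(x²τ/2 − y² conj(τ)/2). -/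
open Complex MeasureTheory
open scoped Classical

/-!
In `τ ↦ φ_τ(x, y)` the operator `∂/∂τ̄` sees only `√(2v)` and `e(-y²τ̄/2)`, so `ξ₁` sends it to
`(1/2 - 2πy²v) conj φ_τ(x, y)`, and conjugation exchanges `x` and `y` in the exponent. On the other
side `t ∂/∂t` exchanges `B(X, Z⁺_t)` and `B(X, Z⁻_t)`: it is the generator of the hyperbolic
rotations of the `(x, y)`-plane. Since `τ - τ̄ = 2iv`, applying this generator to `φ_τ(y, x)` gives
`(1 - 4πy²v) conj φ_τ(x, y)`.
-/

open scoped ComplexConjugate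

lemma hasDerivAt_e (z : ℂ) : HasDerivAt e (2 * Real.pi * I * e z) z := by
  refine ((hasDerivAt_id z).const_mul (2 * Real.pi * I)).cexp.congr_deriv ?_
  rw [id, mul_one, mul_comm, e]

lemma conj_e (z : ℂ) : conj (e z) = e (-conj z) := by
  simp [e, ← exp_conj, conj_ofNat]

lemma conj_Phi (τ : ℂ) (x y : ℝ) :
    conj (Phi τ x y) =
      √(2 * τ.im) * x * e ((y : ℂ) ^ 2 * τ / 2 - (x : ℂ) ^ 2 * conj τ / 2) := by
  simp [Phi, conj_e, conj_ofNat]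

lemma hasFDerivAt_sqrt_two_mul_im {τ : ℂ} (hτ : 0 < τ.im) :
    HasFDerivAt (fun σ : ℂ => √(2 * σ.im)) ((√(2 * τ.im) / (2 * τ.im)) • imCLM) τ := by
  refine ((imCLM.hasFDerivAt.const_mul 2).sqrt (by simpa using hτ.ne')).congr_fderiv ?_
  rw [Real.sqrt_div_self, smul_smul, imCLM_apply]
  congr 1
  ring

lemma hasFDerivAt_Phi {τ : ℂ} (hτ : 0 < τ.im) (x y : ℝ) :
    HasFDerivAt (fun σ => Phi σ x y)
      (Phi τ x y • ((2 * τ.im : ℂ)⁻¹ • ofRealCLM.comp imCLM +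
        (Real.pi * I) • ((x : ℂ) ^ 2 • ContinuousLinearMap.id ℝ ℂ -
          (y : ℂ) ^ 2 • (conjCLE : ℂ →L[ℝ] ℂ)))) τ := by
  have sqrt_deriv := ofRealCLM.hasFDerivAt.comp τ (hasFDerivAt_sqrt_two_mul_im hτ)
  have exponent_deriv : HasFDerivAt
      (fun σ : ℂ => (x : ℂ) ^ 2 * σ / 2 - (y : ℂ) ^ 2 * conj σ / 2)
      ((2⁻¹ : ℂ) • ((x : ℂ) ^ 2 • ContinuousLinearMap.id ℝ ℂ -
        (y : ℂ) ^ 2 • (conjCLE : ℂ →L[ℝ] ℂ))) τ := by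
    convert! (((hasFDerivAt_id τ).const_mul ((x : ℂ) ^ 2)).sub
      ((conjCLE : ℂ →L[ℝ] ℂ).hasFDerivAt.const_mul ((y : ℂ) ^ 2))).const_mul (2⁻¹ : ℂ) using 1
    funext σ
    simp only [Pi.sub_apply, id_eq, ContinuousLinearEquiv.coe_coe, conjCLE_apply]
    ring
  refine ((sqrt_deriv.mul_const (x : ℂ)).mul
    ((hasDerivAt_e _).comp_hasFDerivAt τ exponent_deriv)).congr_fderiv ?_
  ext d
  simp only [Phi, Function.comp_apply, ofRealCLM_apply, coe_smul, add_apply, sub_apply, smul_apply,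
    ContinuousLinearMap.comp_apply, ContinuousLinearMap.id_apply, ContinuousLinearEquiv.coe_coe,
    conjCLE_apply, imCLM_apply, real_smul, smul_eq_mul]
  push_cast
  ring

lemma xi_Phi (k : ℝ) {τ : ℂ} (hτ : 0 < τ.im) (x y : ℝ) :
    xi k (fun σ => Phi σ x y) τ =
      (τ.im ^ k * ((2 * τ.im)⁻¹ - 2 * Real.pi * y ^ 2) : ℝ) * conj (Phi τ x y) := by
  set f' := fderiv ℝ (fun σ => Phi σ x y) τ with hf'
  have wirtinger : f' 1 + I * f' I =
      I * (((2 * τ.im)⁻¹ - 2 * Real.pi * y ^ 2 : ℝ) : ℂ) * Phi τ x y := by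
    rw [hf', (hasFDerivAt_Phi hτ x y).fderiv]
    simp only [add_apply, sub_apply, smul_apply, ContinuousLinearMap.comp_apply,
      ContinuousLinearMap.id_apply, ContinuousLinearEquiv.coe_coe, conjCLE_apply, imCLM_apply,
      ofRealCLM_apply, one_im, I_im, ofReal_zero, ofReal_one, map_one, conj_I, smul_eq_mul]
    push_cast
    linear_combination Phi τ x y * Real.pi * I * (x ^ 2 + y ^ 2) * I_sq
  rw [xi, ← hf', wirtinger]
  simp only [map_mul, map_div₀, map_one, conj_ofNat, conj_I, conj_ofReal]
  push_cast
  linear_combination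
    -(τ.im ^ k : ℝ) * ((2 * τ.im : ℂ)⁻¹ - 2 * Real.pi * y ^ 2) * conj (Phi τ x y) * I_sq

lemma hasDerivAt_Phi_comp (τ : ℂ) {x y : ℝ → ℝ} {x' y' t : ℝ}
    (hx : HasDerivAt x x' t) (hy : HasDerivAt y y' t) :
    HasDerivAt (fun s => Phi τ (x s) (y s))
      (√(2 * τ.im) * (x' + 2 * Real.pi * I * x t * (x t * x' * τ - y t * y' * conj τ)) *
        e ((x t : ℂ) ^ 2 * τ / 2 - (y t : ℂ) ^ 2 * conj τ / 2)) t := by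
  have exponent_deriv : HasDerivAt
      (fun s => (x s : ℂ) ^ 2 * τ / 2 - (y s : ℂ) ^ 2 * conj τ / 2)
      (x t * x' * τ - y t * y' * conj τ) t := by
    refine ((((hx.ofReal_comp.fun_pow 2).mul_const τ).div_const 2).sub
      (((hy.ofReal_comp.fun_pow 2).mul_const (conj τ)).div_const 2)).congr_deriv ?_
    ring
  refine ((hx.ofReal_comp.const_mul _).mul ((hasDerivAt_e _).comp t exponent_deriv)).congr_deriv ?_
  simp only [Function.comp_apply]
  ring

lemma mul_deriv_Phi_hyperbolic (τ : ℂ) {x y : ℝ → ℝ} {x' y' t : ℝ}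
    (hx : HasDerivAt x x' t) (hy : HasDerivAt y y' t) (hxy : t * x' = y t) (hyx : t * y' = x t) :
    t * deriv (fun s => Phi τ (y s) (x s)) t =
      (1 - 4 * Real.pi * y t ^ 2 * τ.im) * conj (Phi τ (x t) (y t)) := by
  have hxy' : (t : ℂ) * x' = y t := mod_cast hxy
  have hyx' : (t : ℂ) * y' = x t := mod_cast hyx
  have tau_sub_conj : τ - conj τ = 2 * τ.im * I := by simpa using sub_conj τ
  rw [(hasDerivAt_Phi_comp τ hy hx).deriv, conj_Phi]
  set E := e ((y t : ℂ) ^ 2 * τ / 2 - (x t : ℂ) ^ 2 * conj τ / 2)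
  calc (t : ℂ) * (√(2 * τ.im) *
          (y' + 2 * Real.pi * I * y t * (y t * y' * τ - x t * x' * conj τ)) * E)
      = √(2 * τ.im) * (t * y' + 2 * Real.pi * I * y t *
          (y t * (t * y') * τ - x t * (t * x') * conj τ)) * E := by ring
    _ = (1 + 2 * Real.pi * I * y t ^ 2 * (τ - conj τ)) * (√(2 * τ.im) * x t * E) := by
        rw [hxy', hyx']
        ring
    _ = (1 - 4 * Real.pi * y t ^ 2 * τ.im) * (√(2 * τ.im) * x t * E) := by
        rw [tau_sub_conj]
        linear_combination
          4 * Real.pi * y t ^ 2 * τ.im * (√(2 * τ.im) * x t * E) * I_sq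

lemma hasDerivAt_Bform_right (X : ℝ × ℝ) {Z : ℝ → ℝ × ℝ} {Z' : ℝ × ℝ} {t : ℝ}
    (hZ : HasDerivAt Z Z' t) : HasDerivAt (fun s => Bform X (Z s)) (Bform X Z') t := by
  have hfst : HasDerivAt (fun s => (Z s).1) Z'.1 t :=
    (hasFDerivAt_fst (𝕜 := ℝ) (p := Z t)).comp_hasDerivAt t hZ
  have hsnd : HasDerivAt (fun s => (Z s).2) Z'.2 t :=
    (hasFDerivAt_snd (𝕜 := ℝ) (p := Z t)).comp_hasDerivAt t hZ
  exact (hsnd.const_mul X.1).add (hfst.const_mul X.2)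

lemma Bform_smul_right (c : ℝ) (X Z : ℝ × ℝ) : Bform X (c • Z) = c * Bform X Z := by
  simp only [Bform, Prod.smul_fst, Prod.smul_snd, smul_eq_mul]
  ring

lemma hasDerivAt_Zp {t : ℝ} (ht : t ≠ 0) : HasDerivAt Zp (t⁻¹ • Zm t) t := by
  refine (((hasDerivAt_id t).div_const √2).prodMk
    ((hasDerivAt_inv ht).div_const √2)).congr_deriv ?_
  ext <;> simp only [Zm, Prod.smul_mk, smul_eq_mul] <;> field_simp

lemma hasDerivAt_Zm {t : ℝ} (ht : t ≠ 0) : HasDerivAt Zm (t⁻¹ • Zp t) t := by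
  refine (((hasDerivAt_id t).div_const √2).prodMk
    ((hasDerivAt_inv ht).neg.div_const √2)).congr_deriv ?_
  ext <;> simp only [Zp, Prod.smul_mk, smul_eq_mul] <;> field_simp

theorem xi_phi_eq_t_deriv_general {x y : ℝ → ℝ} {x' y' t : ℝ}
    (hx : HasDerivAt x x' t) (hy : HasDerivAt y y' t) (hxy : t * x' = y t) (hyx : t * y' = x t)
    {τ : ℂ} (hτ : 0 < τ.im) :
    2 * xi 1 (fun σ => Phi σ (x t) (y t)) τ = t * deriv (fun s => Phi τ (y s) (x s)) t := by
  have hv : (τ.im : ℂ) ≠ 0 := mod_cast hτ.ne'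
  rw [xi_Phi 1 hτ, mul_deriv_Phi_hyperbolic τ hx hy hxy hyx, Real.rpow_one]
  push_cast
  field_simp
  ring

/-- intertwining of `ξ₁` and `t ∂/∂t` on the theta kernel. -/
theorem xi_phi_eq_t_deriv (x₁ x₂ : ℝ) (t : ℝ) (ht : 0 < t) (τ : ℂ) (hτ : 0 < τ.im) :
    2 * xi 1 (fun σ => Phi σ (Bform (x₁, x₂) (Zp t)) (Bform (x₁, x₂) (Zm t))) τ =
      t * deriv (fun s : ℝ => Phi τ (Bform (x₁, x₂) (Zm s)) (Bform (x₁, x₂) (Zp s))) t := by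
  have htZ (Z : ℝ × ℝ) : t * Bform (x₁, x₂) (t⁻¹ • Z) = Bform (x₁, x₂) Z := by
    rw [Bform_smul_right, mul_inv_cancel_left₀ ht.ne']
  exact xi_phi_eq_t_deriv_general (hasDerivAt_Bform_right _ (hasDerivAt_Zp ht.ne'))
    (hasDerivAt_Bform_right _ (hasDerivAt_Zm ht.ne')) (htZ _) (htZ _) hτ
end

section
/- For every τ ∈ H and every x ∈ ℝ, g_{τ+1}(x) = e(−x²/2) · g_τ(x). -/
open Complex MeasureTheory
open scoped Classical

theorem e_intCast (n : ℤ) : e n = 1 := by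
  rw [e, mul_comm, Complex.exp_int_mul_two_pi_mul_I]

theorem e_ne_zero (a : ℂ) : e a ≠ 0 := Complex.exp_ne_zero _

theorem e_mul_add_one_div_two (a τ : ℂ) : e (a * (τ + 1) / 2) = e (a / 2) * e (a * τ / 2) := by
  rw [← e_add]
  ring_nf

theorem e_sq_add_half_div_two (m : ℤ) : e (((m : ℂ) + 1 / 2) ^ 2 / 2) = e (1 / 8) := by
  obtain ⟨k, hk⟩ := Int.even_mul_succ_self m
  have hk' : (m : ℂ) * (m + 1) = k + k := mod_cast hk
  have triangular : ((m : ℂ) + 1 / 2) ^ 2 / 2 = k + 1 / 8 := by linear_combination hk' / 2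
  rw [triangular, e_add, e_intCast, one_mul]

theorem tsum_mul_e_add_one (c : ℤ → ℂ) (τ : ℂ) :
    ∑' m : ℤ, c m * e (((m : ℂ) + 1 / 2) ^ 2 / 2 * (τ + 1) + ((m : ℂ) + 1 / 2) / 2) =
      e (1 / 8) *
        ∑' m : ℤ, c m * e (((m : ℂ) + 1 / 2) ^ 2 / 2 * τ + ((m : ℂ) + 1 / 2) / 2) := by
  rw [← tsum_mul_left]
  refine tsum_congr fun m ↦ ?_
  rw [mul_add_one, add_right_comm, e_add, e_sq_add_half_div_two]
  ring

theorem eta3_add_one (τ : ℂ) : eta3 (τ + 1) = e (1 / 8) * eta3 τ := by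
  rw [eta3, eta3, tsum_mul_e_add_one, mul_left_comm]

theorem gplus_add_one (τ : ℂ) (x : ℝ) :
    gplus (τ + 1) x = e (-(x : ℂ) ^ 2 / 2) * gplus τ x := by
  have root_cancels (s η S : ℂ) :
      s / (Complex.I * (e (1 / 8) * η)) * (e (1 / 8) * S) = s / (Complex.I * η) * S := by
    rw [mul_left_comm Complex.I, div_mul_eq_mul_div, mul_left_comm s,
      mul_div_mul_left _ _ (e_ne_zero _), div_mul_eq_mul_div]
  simp only [gplus, ← ite_zero_mul]
  rw [tsum_mul_e_add_one, eta3_add_one, mul_assoc, root_cancels, e_mul_add_one_div_two]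
  simp only [mul_assoc]

theorem gstar_add_one (τ : ℂ) (x : ℝ) :
    gstar (τ + 1) x = e (-(x : ℂ) ^ 2 / 2) * gstar τ x := by
  have im_add_one : (τ + 1).im = τ.im := by simp only [add_im, one_im, add_zero]
  simp only [gstar, im_add_one, e_mul_add_one_div_two, mul_assoc]

/-- `g_{τ+1}(x) = e(-x²/2)·g_τ(x)`. -/
theorem gfun_translation (τ : ℂ) (hτ : 0 < τ.im) (x : ℝ) :
    gfun (τ + 1) x = e (-(x : ℂ)^2 / 2) * gfun τ x := by
  rw [gfun, gfun, gplus_add_one, gstar_add_one, mul_sub]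
end
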